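/- arXiv:2201.06145 — 2 statements merged into one kernel-verified Lean document; each statement's English description precedes it below -/
import Mathlib

section
/- Let K ⊆ ℝ² be a compact convex set with nonempty interior. Then there exists a 1-periodic Lipschitz curve σ̂ : ℝ → ℝ², injective on [0,1), such that σ̂([0,1]) = ∂K and σ̂(t) = σ̂(0) + ℓ ∫₀ᵗ (cos θ̂(s), sin θ̂(s)) ds for all t ∈ [0,1], where ℓ > 0 is the length of σ̂ and θ̂ : ℝ → ℝ is a nondecreasing function satisfying θ̂(t+1) − θ̂(t) = 2π for all t ∈ ℝ. -/
open Set MeasureTheory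
open scoped NNReal

noncomputable abbrev dirVec (θ : ℝ → ℝ) (s : ℝ) : EuclideanSpace ℝ (Fin 2) :=
  (EuclideanSpace.equiv (Fin 2) ℝ).symm ![Real.cos (θ s), Real.sin (θ s)]

open Filter Topology

/-- The unit vector at angle `x`. -/
noncomputable def ev (x : ℝ) : EuclideanSpace ℝ (Fin 2) :=
  (EuclideanSpace.equiv (Fin 2) ℝ).symm ![Real.cos x, Real.sin x]

theorem ev_zero (x : ℝ) : ev x 0 = Real.cos x := rfl
theorem ev_one (x : ℝ) : ev x 1 = Real.sin x := rfl

theorem ev_norm (x : ℝ) : ‖ev x‖ = 1 := by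
  rw [EuclideanSpace.norm_eq, Fin.sum_univ_two, ev_zero, ev_one]
  simp

theorem ev_add_two_pi (x : ℝ) : ev (x + 2 * Real.pi) = ev x := by
  simp [ev]

theorem ev_continuous : Continuous ev := by
  unfold ev
  refine (EuclideanSpace.equiv (Fin 2) ℝ).symm.continuous.comp ?_
  refine continuous_pi fun i => ?_
  fin_cases i
  · exact Real.continuous_cos
  · exact Real.continuous_sin

theorem ev_hasDerivAt (x : ℝ) : HasDerivAt ev (ev (x + Real.pi / 2)) x := by
  have h : HasDerivAt (fun x : ℝ => (![Real.cos x, Real.sin x] : Fin 2 → ℝ))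
      ![Real.cos (x + Real.pi / 2), Real.sin (x + Real.pi / 2)] x := by
    rw [hasDerivAt_pi]
    intro i
    fin_cases i
    · simpa [Real.cos_add_pi_div_two] using Real.hasDerivAt_cos x
    · simpa [Real.sin_add_pi_div_two] using Real.hasDerivAt_sin x
  exact ((EuclideanSpace.equiv (Fin 2) ℝ).symm.toContinuousLinearMap.hasFDerivAt).comp_hasDerivAt x h

theorem ev_ext {x y : EuclideanSpace ℝ (Fin 2)} (h0 : x 0 = y 0) (h1 : x 1 = y 1) : x = y := by
  ext i
  fin_cases i
  · exact h0
  · exact h1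

theorem ev_polar (x : EuclideanSpace ℝ (Fin 2)) :
    ∃ φ : ℝ, x = ‖x‖ • ev φ := by
  have hn : ‖(⟨x 0, x 1⟩ : ℂ)‖ = ‖x‖ := by
    rw [EuclideanSpace.norm_eq, Fin.sum_univ_two, Complex.norm_def, Complex.normSq_apply]
    simp [sq]
  refine ⟨Complex.arg ⟨x 0, x 1⟩, ev_ext ?_ ?_⟩
  · have := Complex.norm_mul_cos_arg ⟨x 0, x 1⟩
    rw [hn] at this
    simp [ev_zero, this]
  · have := Complex.norm_mul_sin_arg ⟨x 0, x 1⟩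
    rw [hn] at this
    simp [ev_one, this]

theorem ev_inj {x y : ℝ} (hx : x ∈ Ico 0 (2 * Real.pi)) (hy : y ∈ Ico 0 (2 * Real.pi))
    (h : ev x = ev y) : x = y := by
  have h0 : Real.cos x = Real.cos y := by rw [← ev_zero, h, ev_zero]
  have h1 : Real.sin x = Real.sin y := by rw [← ev_one, h, ev_one]
  obtain ⟨k, hk⟩ := Real.Angle.angle_eq_iff_two_pi_dvd_sub.1 (Real.Angle.cos_sin_inj h0 h1)
  have hp := Real.pi_pos
  have hk1 : (k : ℝ) < 1 := by
    by_contra hc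
    push Not at hc
    nlinarith [hx.1, hx.2, hy.1, hy.2]
  have hk2 : (-1 : ℝ) < k := by
    by_contra hc
    push Not at hc
    nlinarith [hx.1, hx.2, hy.1, hy.2]
  have : k = 0 := by
    have h1 : k < 1 := by exact_mod_cast hk1
    have h2 : -1 < k := by exact_mod_cast hk2
    omega
  subst this
  simp at hk
  linarith

/-- Monotonicity of the support angle. -/
theorem al_mono {r α : ℝ → ℝ} (hr : ∀ x, 0 < r x)
    (h1 : ∀ x, x - Real.pi / 2 < α x) (h2 : ∀ x, α x < x + Real.pi / 2)
    (hs : ∀ x y, r y * Real.cos (y - α x) ≤ r x * Real.cos (x - α x)) : Monotone α := by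
  intro x y hxy
  rcases hxy.eq_or_lt with rfl | hlt
  · exact le_rfl
  by_contra hc
  push Not at hc
  have a1 := h1 x
  have a2 := h2 x
  have b1 := h1 y
  have b2 := h2 y
  have c1 : 0 < Real.cos (y - α x) := Real.cos_pos_of_mem_Ioo ⟨by linarith, by linarith⟩
  have c2 : 0 < Real.cos (x - α y) := Real.cos_pos_of_mem_Ioo ⟨by linarith, by linarith⟩
  have i1 := hs x y
  have i2 := hs y x
  have hm := mul_le_mul i1 i2 (mul_nonneg (hr x).le c2.le)
    ((mul_nonneg (hr y).le c1.le).trans i1)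
  have hrr : 0 < r x * r y := mul_pos (hr x) (hr y)
  have hm2 : Real.cos (y - α x) * Real.cos (x - α y) ≤
      Real.cos (x - α x) * Real.cos (y - α y) := by
    refine le_of_mul_le_mul_left ?_ hrr
    nlinarith [hm]
  have s1 : 0 < Real.sin (y - x) := Real.sin_pos_of_pos_of_lt_pi (by linarith) (by linarith)
  have s2 : 0 < Real.sin (α x - α y) := Real.sin_pos_of_pos_of_lt_pi (by linarith) (by linarith)
  have key : Real.cos (y - α x) * Real.cos (x - α y) - Real.cos (x - α x) * Real.cos (y - α y)
      = Real.sin (y - x) * Real.sin (α x - α y) := by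
    simp only [Real.cos_sub, Real.sin_sub]
    ring
  nlinarith [mul_pos s1 s2]

theorem r_hasDerivAt {r α : ℝ → ℝ}
    (h1 : ∀ x, x - Real.pi / 2 < α x) (h2 : ∀ x, α x < x + Real.pi / 2)
    (hs : ∀ x y, r y * Real.cos (y - α x) ≤ r x * Real.cos (x - α x)) (x : ℝ)
    (hc : ContinuousAt α x) :
    HasDerivAt r (r x * Real.sin (x - α x) / Real.cos (x - α x)) x := by
  set c := r x * Real.sin (x - α x) / Real.cos (x - α x) with hcdef
  have hcos : ∀ y, 0 < Real.cos (y - α y) := fun y =>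
    Real.cos_pos_of_mem_Ioo ⟨by linarith [h2 y], by linarith [h1 y]⟩
  let G : ℝ → ℝ → ℝ := fun y b =>
    r x * Real.sin ((x + y) / 2 - b) * Real.sinc ((y - x) / 2) / Real.cos (y - b)
  have hG : ∀ y b, 0 < Real.cos (y - b) → 
      (y - x) * G y b * Real.cos (y - b) = r x * (Real.cos (x - b) - Real.cos (y - b)) := by
    intro y b hb
    have e1 : (y - x) / 2 * Real.sinc ((y - x) / 2) = Real.sin ((y - x) / 2) := by
      by_cases h : (y - x) / 2 = 0
      · simp [h]
      · rw [Real.sinc_of_ne_zero h]; exact mul_div_cancel₀ _ h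
    have e2 : Real.cos (x - b) - Real.cos (y - b) =
        2 * Real.sin ((x + y) / 2 - b) * Real.sin ((y - x) / 2) := by
      rw [Real.cos_sub_cos]
      have : (x - b - (y - b)) / 2 = - ((y - x) / 2) := by ring
      rw [this, Real.sin_neg]
      have : (x - b + (y - b)) / 2 = (x + y) / 2 - b := by ring
      rw [this]; ring
    rw [e2, ← e1]
    simp only [G]
    field_simp
  have hGx : G x (α x) = c := by
    simp only [G, hcdef]
    simp
  have hGt : ∀ β : ℝ → ℝ, ContinuousAt β x → β x = α x →
      Tendsto (fun y => G y (β y)) (𝓝 x) (𝓝 c) := by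
    intro β hβ hβx
    have : ContinuousAt (fun y => G y (β y)) x := by
      simp only [G]
      have hsc : ContinuousAt (fun y => Real.sinc ((y - x) / 2)) x :=
        (Real.continuous_sinc.comp (by fun_prop)).continuousAt
      refine ContinuousAt.div (ContinuousAt.mul (ContinuousAt.mul (by fun_prop) ?_) hsc) ?_ ?_
      · exact Real.continuous_sin.continuousAt.comp (ContinuousAt.sub (by fun_prop) hβ)
      · exact Real.continuous_cos.continuousAt.comp (ContinuousAt.sub (by fun_prop) hβ)
      · rw [hβx]; exact (hcos x).ne'
    have h := this.tendsto
    simpa only [hβx, hGx] using h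
  have t1 := hGt α hc rfl
  have t2 := hGt (fun _ => α x) continuousAt_const rfl
  have hev : ∀ᶠ y in 𝓝 x, 0 < Real.cos (y - α x) := by
    have : ContinuousAt (fun y => Real.cos (y - α x)) x := by fun_prop
    exact this.eventually (lt_mem_nhds (hcos x))
  rw [hasDerivAt_iff_isLittleO, Asymptotics.isLittleO_iff]
  intro ε hε
  have u1 := Metric.tendsto_nhds.1 t1 ε hε
  have u2 := Metric.tendsto_nhds.1 t2 ε hε
  filter_upwards [hev, u1, u2] with y hy v1 v2
  rw [Real.dist_eq] at v1 v2
  have g1 := hG y (α y) (hcos y)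
  have g2 := hG y (α x) hy
  have l1 : (y - x) * G y (α y) ≤ r y - r x := by
    refine le_of_mul_le_mul_right ?_ (hcos y)
    nlinarith [hs y x]
  have l2 : r y - r x ≤ (y - x) * G y (α x) := by
    refine le_of_mul_le_mul_right ?_ hy
    nlinarith [hs x y]
  have w1 : |(y - x) * (G y (α y) - c)| ≤ ε * |y - x| := by
    rw [abs_mul, mul_comm]
    exact mul_le_mul_of_nonneg_right v1.le (abs_nonneg _)
  have w2 : |(y - x) * (G y (α x) - c)| ≤ ε * |y - x| := by
    rw [abs_mul, mul_comm]
    exact mul_le_mul_of_nonneg_right v2.le (abs_nonneg _)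
  rw [Real.norm_eq_abs, Real.norm_eq_abs, smul_eq_mul, abs_le]
  rw [abs_le] at w1 w2
  constructor <;> nlinarith

theorem ga_hasDerivAt {r α : ℝ → ℝ}
    (h1 : ∀ x, x - Real.pi / 2 < α x) (h2 : ∀ x, α x < x + Real.pi / 2)
    (hs : ∀ x y, r y * Real.cos (y - α x) ≤ r x * Real.cos (x - α x)) (x : ℝ)
    (hc : ContinuousAt α x) :
    HasDerivAt (fun x => r x • ev x)
      ((r x / Real.cos (x - α x)) • ev (α x + Real.pi / 2)) x := by
  have h := (r_hasDerivAt h1 h2 hs x hc).smul (ev_hasDerivAt x)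
  have hcos : 0 < Real.cos (x - α x) :=
    Real.cos_pos_of_mem_Ioo ⟨by linarith [h2 x], by linarith [h1 x]⟩
  refine HasDerivAt.congr_deriv (f := fun x => r x • ev x) h ?_
  apply ev_ext
  · simp only [PiLp.add_apply, PiLp.smul_apply, smul_eq_mul, ev_zero, Real.cos_add_pi_div_two]
    have : Real.sin (α x) = Real.sin x * Real.cos (x - α x) - Real.cos x * Real.sin (x - α x) := by
      rw [← Real.sin_sub]; congr 1; ring
    rw [this]; field_simp; ring
  · simp only [PiLp.add_apply, PiLp.smul_apply, smul_eq_mul, ev_one, Real.sin_add_pi_div_two]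
    have : Real.cos (α x) = Real.cos x * Real.cos (x - α x) + Real.sin x * Real.sin (x - α x) := by
      rw [← Real.cos_sub]; congr 1; ring
    rw [this]; field_simp

theorem geom (K : Set (EuclideanSpace ℝ (Fin 2)))
    (hK : IsCompact K) (hconv : Convex ℝ K) (h0 : (0 : EuclideanSpace ℝ (Fin 2)) ∈ interior K) :
    ∃ r α : ℝ → ℝ, Continuous r ∧ (∀ x, 0 < r x) ∧ (∀ x, r (x + 2 * Real.pi) = r x) ∧
      (∀ x, x - Real.pi / 2 < α x) ∧ (∀ x, α x < x + Real.pi / 2) ∧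
      (∀ x y, r y * Real.cos (y - α x) ≤ r x * Real.cos (x - α x)) ∧
      (∀ x, α (x + 2 * Real.pi) = α x + 2 * Real.pi) ∧
      (range fun x => r x • ev x) = frontier K := by
  have hn : K ∈ 𝓝 (0 : EuclideanSpace ℝ (Fin 2)) := mem_interior_iff_mem_nhds.1 h0
  have hgpos : ∀ x, 0 < gauge K (ev x) := fun x => by
    rw [gauge_pos (absorbent_nhds_zero hn) ((NormedSpace.isVonNBounded_iff ℝ).2 hK.isBounded)]
    intro h
    have := ev_norm x
    rw [h] at this
    simp at this
  set r : ℝ → ℝ := fun x => (gauge K (ev x))⁻¹ with hr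
  have hrpos : ∀ x, 0 < r x := fun x => inv_pos.2 (hgpos x)
  have hrp : ∀ x, r (x + 2 * Real.pi) = r x := fun x => by simp only [hr, ev_add_two_pi]
  have hmem : ∀ x, r x • ev x ∈ frontier K := fun x => by
    rw [← gauge_eq_one_iff_mem_frontier hconv hn, gauge_smul_of_nonneg (hrpos x).le, smul_eq_mul]
    exact inv_mul_cancel₀ (hgpos x).ne'
  let P : ℝ → ℝ → Prop := fun x δ => -(Real.pi / 2) < δ ∧ δ < Real.pi / 2 ∧
    ∀ y, r y * Real.cos (y - (x + δ)) ≤ r x * Real.cos δ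
  have hP : ∀ x, ∃ δ, P x δ := by
    intro x
    obtain ⟨f, hf⟩ := geometric_hahn_banach_open_point hconv.interior isOpen_interior (hmem x).2
    have hfK : ∀ z ∈ K, f z ≤ f (r x • ev x) := by
      intro z hz
      have hz' : z ∈ closure (interior K) := by
        rw [hconv.closure_interior_eq_closure_of_nonempty_interior ⟨0, h0⟩]
        exact subset_closure hz
      exact closure_minimal (t := {z | f z ≤ f (r x • ev x)}) (fun a ha => (hf a ha).le)
        (isClosed_le f.continuous continuous_const) hz'
    set a := f (ev x) with ha
    set b := f (ev (x + Real.pi / 2)) with hb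
    have hapos : 0 < a := by
      have := hf 0 h0
      rw [map_zero, map_smul, smul_eq_mul] at this
      exact (pos_iff_pos_of_mul_pos this).1 (hrpos x)
    have hfe : ∀ y, f (ev y) = a * Real.cos (y - x) + b * Real.sin (y - x) := by
      intro y
      have : ev y = Real.cos (y - x) • ev x + Real.sin (y - x) • ev (x + Real.pi / 2) := by
        apply ev_ext
        · simp only [PiLp.add_apply, PiLp.smul_apply, smul_eq_mul, ev_zero, Real.cos_add_pi_div_two]
          have : Real.cos y = Real.cos ((y - x) + x) := by congr 1; ring
          rw [this, Real.cos_add]; ring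
        · simp only [PiLp.add_apply, PiLp.smul_apply, smul_eq_mul, ev_one, Real.sin_add_pi_div_two]
          have : Real.sin y = Real.sin ((y - x) + x) := by congr 1; ring
          rw [this, Real.sin_add]; ring
      rw [this, map_add, map_smul, map_smul, smul_eq_mul, smul_eq_mul, ← ha, ← hb]
      ring
    refine ⟨Real.arctan (b / a), Real.neg_pi_div_two_lt_arctan _, Real.arctan_lt_pi_div_two _, ?_⟩
    set δ := Real.arctan (b / a) with hδ
    have hcδ : 0 < Real.cos δ := Real.cos_arctan_pos _
    have hbs : b * Real.cos δ = a * Real.sin δ := by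
      have : Real.tan δ = b / a := Real.tan_arctan _
      rw [Real.tan_eq_sin_div_cos] at this
      field_simp at this
      linarith
    intro y
    have hy := hfK _ (hK.isClosed.frontier_subset (hmem y))
    rw [map_smul, map_smul, smul_eq_mul, smul_eq_mul, hfe y, ← ha] at hy
    have e : a * Real.cos (y - (x + δ)) =
        (a * Real.cos (y - x) + b * Real.sin (y - x)) * Real.cos δ := by
      have : y - (x + δ) = (y - x) - δ := by ring
      rw [this, Real.cos_sub (y - x)]
      linear_combination (-Real.sin (y - x)) * hbs
    refine le_of_mul_le_mul_left ?_ hapos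
    have := mul_le_mul_of_nonneg_right hy hcδ.le
    linear_combination this + r y * e
  have hPp : ∀ x, P (x + 2 * Real.pi) = P x := by
    intro x
    funext δ
    simp only [P, hrp]
    congr 2
    refine propext (forall_congr' fun y => ?_)
    have : y - (x + δ) = y - (x + 2 * Real.pi + δ) + 2 * Real.pi := by ring
    rw [this, Real.cos_add_two_pi]
  have hD : ∀ x, P x (Classical.epsilon (P x)) := fun x => Classical.epsilon_spec (hP x)
  refine ⟨r, fun x => x + Classical.epsilon (P x), ?_, hrpos, hrp, ?_, ?_, ?_, ?_, ?_⟩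
  · exact ((continuous_gauge hconv hn).comp ev_continuous).inv₀ fun x => (hgpos x).ne'
  · intro x; linarith [(hD x).1]
  · intro x; linarith [(hD x).2.1]
  · intro x y
    have := (hD x).2.2 y
    have e : Real.cos (x - (x + Classical.epsilon (P x))) = Real.cos (Classical.epsilon (P x)) := by
      rw [← Real.cos_neg]; congr 1; ring
    simp only [e]
    exact this
  · intro x
    simp only [hPp]; ring
  · apply Subset.antisymm
    · rintro _ ⟨x, rfl⟩
      exact hmem x
    · intro z hz
      obtain ⟨φ, hφ⟩ := ev_polar z
      have hg := (gauge_eq_one_iff_mem_frontier hconv hn).2 hz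
      rw [hφ, gauge_smul_of_nonneg (norm_nonneg _), smul_eq_mul] at hg
      refine ⟨φ, ?_⟩
      have : r φ = ‖z‖ := by
        simp only [hr]
        exact (eq_inv_of_mul_eq_one_left hg).symm
      simp only [this]
      exact hφ.symm

theorem main0 {r α : ℝ → ℝ} (hrc : Continuous r) (hr : ∀ x, 0 < r x)
    (hrp : ∀ x, r (x + 2 * Real.pi) = r x)
    (h1 : ∀ x, x - Real.pi / 2 < α x) (h2 : ∀ x, α x < x + Real.pi / 2)
    (hs : ∀ x y, r y * Real.cos (y - α x) ≤ r x * Real.cos (x - α x))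
    (hαp : ∀ x, α (x + 2 * Real.pi) = α x + 2 * Real.pi) :
    ∃ (σ : ℝ → EuclideanSpace ℝ (Fin 2)) (L : ℝ≥0) (ℓ : ℝ) (θ : ℝ → ℝ),
      LipschitzWith L σ ∧ Function.Periodic σ 1 ∧ Set.InjOn σ (Set.Ico 0 1) ∧
      σ '' Set.Icc 0 1 = (range fun x => r x • ev x) ∧ 0 < ℓ ∧
      ℓ = ∫ s in (0:ℝ)..1, ‖deriv σ s‖ ∧
      Monotone θ ∧ (∀ t, θ (t + 1) - θ t = 2 * Real.pi) ∧
      ∀ t ∈ Set.Icc (0:ℝ) 1, σ t = σ 0 + ℓ • ∫ s in (0:ℝ)..t, ev (θ s) := by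
  have hpi := Real.pi_pos
  have hmono := al_mono hr h1 h2 hs
  have hcos : ∀ y, 0 < Real.cos (y - α y) := fun y =>
    Real.cos_pos_of_mem_Ioo ⟨by linarith [h2 y], by linarith [h1 y]⟩
  set v : ℝ → ℝ := fun x => r x / Real.cos (x - α x) with hv
  have hvpos : ∀ x, 0 < v x := fun x => div_pos (hr x) (hcos x)
  have hvp : Function.Periodic v (2 * Real.pi) := by
    intro x
    simp only [hv, hrp, hαp]
    congr 2; ring
  have hvm : Measurable v :=
    hrc.measurable.div (Real.measurable_cos.comp (measurable_id.sub hmono.measurable))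
  -- boundedness of `v`
  have hrper : Function.Periodic r (2 * Real.pi) := hrp
  have hcomp : IsCompact (range r) := hrper.compact_of_continuous (by positivity) hrc
  obtain ⟨_, ⟨xm, rfl⟩, hmin⟩ := hcomp.exists_isLeast ⟨r 0, mem_range_self 0⟩
  obtain ⟨_, ⟨xM, rfl⟩, hmax⟩ := hcomp.exists_isGreatest ⟨r 0, mem_range_self 0⟩
  have hvb : ∀ x, v x ≤ r xM * r xM / r xm := by
    intro x
    have i1 := hs x (α x)
    rw [sub_self, Real.cos_zero, mul_one] at i1
    have i2 : r xm ≤ r (α x) := hmin (mem_range_self _)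
    have i3 : r x ≤ r xM := hmax (mem_range_self _)
    simp only [hv]
    rw [div_le_div_iff₀ (hcos x) (hr xm)]
    have := hr x
    have := hcos x
    calc r x * r xm ≤ r x * (r x * Real.cos (x - α x)) := by gcongr; linarith
      _ = r x * r x * Real.cos (x - α x) := by ring
      _ ≤ r xM * r xM * Real.cos (x - α x) := by gcongr; exact (hr xM).le
  have hvi : ∀ a b, IntervalIntegrable v volume a b := by
    intro a b
    refine (intervalIntegrable_const (c := r xM * r xM / r xm)).mono_fun
      hvm.aestronglyMeasurable ?_
    refine Eventually.of_forall fun x => ?_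
    change ‖v x‖ ≤ _
    rw [Real.norm_of_nonneg (hvpos x).le]
    exact (hvb x).trans (le_abs_self _)
  -- arc length
  set A : ℝ → ℝ := fun x => ∫ s in (0:ℝ)..x, v s with hA
  have hAc : Continuous A := intervalIntegral.continuous_primitive hvi 0
  have hAsub : ∀ x y, A y - A x = ∫ s in x..y, v s := fun x y =>
    intervalIntegral.integral_interval_sub_left (hvi _ _) (hvi _ _)
  have hAmono : StrictMono A := by
    intro x y hxy
    have := intervalIntegral.intervalIntegral_pos_of_pos (hvi x y) hvpos hxy
    rw [← hAsub] at this
    linarith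
  have hAsurj : Function.Surjective A := hAc.surjective
    (hvp.tendsto_atTop_intervalIntegral_of_pos' (hvi _ _) hvpos (by positivity))
    (hvp.tendsto_atBot_intervalIntegral_of_pos' (hvi _ _) hvpos (by positivity))
  set ℓ := A (2 * Real.pi) with hℓ
  have hA0 : A 0 = 0 := by simp [hA]
  have hℓpos : 0 < ℓ := by
    rw [← hA0]; exact hAmono (by positivity)
  have hAp : ∀ x, A (x + 2 * Real.pi) = A x + ℓ := by
    intro x
    have := hvp.intervalIntegral_add_eq_add 0 x hvi
    rw [zero_add] at this
    exact this
  let O : ℝ ≃o ℝ := hAmono.orderIsoOfSurjective A hAsurj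
  have hO : ∀ x, O x = A x := fun x => rfl
  set Φ : ℝ → ℝ := fun t => O.symm (ℓ * t) with hΦ
  have hAΦ : ∀ t, A (Φ t) = ℓ * t := fun t => by
    rw [← hO]; exact O.apply_symm_apply _
  have hΦmono : StrictMono Φ := fun s t h => O.symm.strictMono (by gcongr)
  have hΦc : Continuous Φ := O.symm.continuous.comp (by fun_prop)
  have hΦ0 : Φ 0 = 0 := hAmono.injective (by rw [hAΦ, hA0, mul_zero])
  have hΦp : ∀ t, Φ (t + 1) = Φ t + 2 * Real.pi := fun t =>
    hAmono.injective (by rw [hAΦ, hAp, hAΦ]; ring)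
  have hΦ1 : Φ 1 = 2 * Real.pi := by
    have := hΦp 0
    rwa [zero_add, hΦ0, zero_add] at this
  set σ : ℝ → EuclideanSpace ℝ (Fin 2) := fun t => r (Φ t) • ev (Φ t) with hσ
  set θ : ℝ → ℝ := fun t => α (Φ t) + Real.pi / 2 with hθ
  have hθm : Monotone θ := fun s t h => by
    have := hmono (hΦmono.monotone h)
    simp only [hθ]; linarith
  have hσc : Continuous σ := (hrc.comp hΦc).smul (ev_continuous.comp hΦc)
  have hσp : Function.Periodic σ 1 := fun t => by
    simp only [hσ, hΦp, hrp, ev_add_two_pi]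
  -- the exceptional set
  set S : Set ℝ := Φ ⁻¹' {x | ¬ ContinuousAt α x} with hS
  have hScount : S.Countable :=
    hmono.countable_not_continuousAt.preimage hΦmono.injective
  have hσd : ∀ t, t ∉ S → HasDerivAt σ (ℓ • ev (θ t)) t := by
    intro t ht
    have hc : ContinuousAt α (Φ t) := by simpa [hS] using ht
    have hγ := ga_hasDerivAt h1 h2 hs (Φ t) hc
    have hvc : ContinuousAt v (Φ t) := by
      refine hrc.continuousAt.div ?_ (hcos _).ne'
      exact Real.continuous_cos.continuousAt.comp (continuousAt_id.sub hc)
    have hAd : HasDerivAt A (v (Φ t)) (Φ t) :=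
      intervalIntegral.integral_hasDerivAt_right (hvi _ _)
        (hvm.stronglyMeasurable.stronglyMeasurableAtFilter) hvc
    have hAd' : HasDerivAt (fun x => A x / ℓ) (v (Φ t) / ℓ) (Φ t) := hAd.div_const ℓ
    have hΦd : HasDerivAt Φ (v (Φ t) / ℓ)⁻¹ t :=
      HasDerivAt.of_local_left_inverse hΦc.continuousAt hAd' (div_pos (hvpos _) hℓpos).ne'
        (Eventually.of_forall fun y => by rw [hAΦ]; field_simp)
    have := HasDerivAt.scomp t hγ hΦd
    refine HasDerivAt.congr_deriv (f := σ) this ?_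
    rw [smul_smul]
    refine congrArg (fun c : ℝ => c • ev (θ t)) ?_
    have := (hvpos (Φ t)).ne'
    change (v (Φ t) / ℓ)⁻¹ * v (Φ t) = ℓ
    field_simp
  have hei : ∀ a b, IntervalIntegrable (fun s => ev (θ s)) volume a b := by
    intro a b
    refine (intervalIntegrable_const (c := (1:ℝ))).mono_fun
      (ev_continuous.measurable.comp hθm.measurable).aestronglyMeasurable ?_
    refine Eventually.of_forall fun x => ?_
    simp [ev_norm]
  have hFTC : ∀ a b, σ b - σ a = ℓ • ∫ s in a..b, ev (θ s) := by
    intro a b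
    rw [← intervalIntegral.integral_smul]
    exact (MeasureTheory.integral_eq_of_hasDerivAt_off_countable σ (fun s => ℓ • ev (θ s)) hScount
      hσc.continuousOn (fun x hx => hσd x hx.2) ((hei a b).smul ℓ)).symm
  refine ⟨σ, ⟨ℓ, hℓpos.le⟩, ℓ, θ, ?_, hσp, ?_, ?_, hℓpos, ?_, hθm, ?_, ?_⟩
  · refine LipschitzWith.of_dist_le_mul fun x y => ?_
    rw [dist_eq_norm, hFTC, norm_smul, Real.norm_of_nonneg hℓpos.le, Real.dist_eq]
    change _ ≤ ℓ * _
    gcongr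
    have := intervalIntegral.norm_integral_le_of_norm_le_const (a := y) (b := x) (C := 1)
      (f := fun s => ev (θ s)) (fun s _ => (ev_norm _).le)
    simpa using this
  · intro s hs t ht hst
    have hmem : ∀ u ∈ Ico (0:ℝ) 1, Φ u ∈ Ico 0 (2 * Real.pi) := fun u hu => by
      rw [← hΦ0, ← hΦ1]
      exact ⟨hΦmono.monotone hu.1, hΦmono hu.2⟩
    have hn : r (Φ s) = r (Φ t) := by
      have := congrArg norm hst
      simpa only [hσ, norm_smul, ev_norm, mul_one, Real.norm_of_nonneg (hr _).le] using this
    have he : ev (Φ s) = ev (Φ t) := by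
      simp only [hσ, hn] at hst
      exact smul_right_injective _ (hr (Φ t)).ne' hst
    exact hΦmono.injective (ev_inj (hmem s hs) (hmem t ht) he)
  · have e1 : σ '' Icc 0 1 = range σ := by
      have := hσp.image_Icc one_pos 0
      rwa [zero_add] at this
    rw [e1]
    have hΦs : Function.Surjective Φ := fun x => ⟨A x / ℓ, hAmono.injective (by
      rw [hAΦ]; field_simp)⟩
    exact hΦs.range_comp (fun x => r x • ev x)
  · have : ∫ s in (0:ℝ)..1, ‖deriv σ s‖ = ∫ s in (0:ℝ)..1, ℓ := by
      refine intervalIntegral.integral_congr_ae ?_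
      filter_upwards [hScount.ae_notMem volume] with t ht _
      rw [(hσd t ht).deriv, norm_smul, ev_norm, mul_one, Real.norm_of_nonneg hℓpos.le]
    rw [this]; simp
  · intro t
    simp only [hθ, hΦp, hαp]; ring
  · intro t _
    rw [← hFTC]; abel

theorem stmt_6 (K : Set (EuclideanSpace ℝ (Fin 2)))
    (hK : IsCompact K) (hconv : Convex ℝ K) (hint : (interior K).Nonempty) :
    ∃ (σ : ℝ → EuclideanSpace ℝ (Fin 2)) (L : ℝ≥0) (ℓ : ℝ) (θ : ℝ → ℝ),
      LipschitzWith L σ ∧ Function.Periodic σ 1 ∧ Set.InjOn σ (Set.Ico 0 1) ∧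
      σ '' Set.Icc 0 1 = frontier K ∧ 0 < ℓ ∧
      ℓ = ∫ s in (0:ℝ)..1, ‖deriv σ s‖ ∧
      Monotone θ ∧ (∀ t, θ (t + 1) - θ t = 2 * Real.pi) ∧
      ∀ t ∈ Set.Icc (0:ℝ) 1, σ t = σ 0 + ℓ • ∫ s in (0:ℝ)..t, dirVec θ s := by
  obtain ⟨p, hp⟩ := hint
  let T : EuclideanSpace ℝ (Fin 2) ≃ₜ EuclideanSpace ℝ (Fin 2) := Homeomorph.addRight p
  have hT : ∀ x, T x = x + p := fun x => rfl
  obtain ⟨r, α, hrc, hr, hrp, h1, h2, hs, hαp, hran⟩ := geom (T ⁻¹' K)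
    (T.isCompact_preimage.2 hK) (hconv.translate_preimage_left p)
    (by rw [← T.preimage_interior]; simpa [hT] using hp)
  obtain ⟨σ, L, ℓ, θ, a1, a2, a3, a4, a5, a6, a7, a8, a9⟩ := main0 hrc hr hrp h1 h2 hs hαp
  refine ⟨fun t => σ t + p, L, ℓ, θ, ?_, ?_, ?_, ?_, a5, ?_, a7, a8, ?_⟩
  · refine LipschitzWith.of_dist_le_mul fun x y => ?_
    simpa using a1.dist_le_mul x y
  · intro t
    simp only [a2 t]
  · intro s hs t ht h
    exact a3 hs ht (add_right_cancel h)
  · have : (fun t => σ t + p) '' Icc 0 1 = T '' (σ '' Icc 0 1) := by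
      rw [image_image]; rfl
    rw [this, a4, hran, ← T.preimage_frontier, T.image_preimage]
  · simpa using a6
  · intro t ht
    have := a9 t ht
    change σ t + p = σ 0 + p + ℓ • ∫ s in (0:ℝ)..t, ev (θ s)
    rw [this]; abel
end

section
/- Let F ⊆ ℝ² be a bounded, closed, convex set. Then the distance function d_F belongs to C^{1,1}_loc(ℝ² \ F), its distributional Laplacian Δd_F is nonnegative a.e. in ℝ² \ F, and Δd_F ∈ L¹(B \ F) for every open ball B containing F compactly, with ∫_{B \ F_η⁺} Δd_F dx ≤ H¹(∂B) + H¹(∂(F_η⁺)) for every small η > 0, where F_η⁺ = {x : dist(x,F) ≤ η}. -/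
open Set Filter MeasureTheory Bornology
open scoped Topology ENNReal NNReal

noncomputable abbrev E2 := EuclideanSpace ℝ (Fin 2)

/-- The Laplacian of a function on ℝ² (sum of second derivatives along the
standard orthonormal basis). -/
noncomputable def lap (f : E2 → ℝ) (x : E2) : ℝ :=
  ∑ i : Fin 2,
    fderiv ℝ (fun y => fderiv ℝ f y (EuclideanSpace.basisFun (Fin 2) ℝ i)) x
      (EuclideanSpace.basisFun (Fin 2) ℝ i)

/-- Distance function to a set. -/
noncomputable def dF (F : Set E2) (x : E2) : ℝ := Metric.infDist x F

lemma proj_exists (F : Set E2) (hFc : IsClosed F) (hFconv : Convex ℝ F) (hne : F.Nonempty) :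
    ∃ p : E2 → E2, ∀ x, p x ∈ F ∧ Metric.infDist x F = ‖x - p x‖ ∧
      ∀ w ∈ F, inner ℝ (x - p x) (w - p x) ≤ 0 := by
  have h : ∀ x, ∃ q, q ∈ F ∧ Metric.infDist x F = ‖x - q‖ ∧
      ∀ w ∈ F, inner ℝ (x - q) (w - q) ≤ 0 := by
    intro x
    obtain ⟨q, hq, hd⟩ := hFc.exists_infDist_eq_dist hne x
    refine ⟨q, hq, by rw [hd, dist_eq_norm], ?_⟩
    apply (norm_eq_iInf_iff_real_inner_le_zero hFconv hq).1
    rw [← dist_eq_norm, ← hd, Metric.infDist_eq_iInf]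
    simp only [dist_eq_norm]
  choose p hp using h
  exact ⟨p, hp⟩

lemma normal_exists (F : Set E2) (hFc : IsClosed F) (hFconv : Convex ℝ F) (hne : F.Nonempty) :
    ∃ n : E2 → E2, (∀ x ∉ F, ‖n x‖ = 1) ∧
      (∀ x ∉ F, ∀ y, dF F x + inner ℝ (n x) (y - x) ≤ dF F y) ∧
      (∀ x ∉ F, HasFDerivAt (dF F) (innerSL ℝ (n x)) x) ∧
      (∀ δ > 0, ∃ L : ℝ≥0, LipschitzOnWith L n {x | δ ≤ dF F x}) := by
  obtain ⟨p, hp⟩ := proj_exists F hFc hFconv hne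
  have hpos : ∀ x ∉ F, 0 < ‖x - p x‖ := by
    intro x hx
    rw [← (hp x).2.1]
    exact (hFc.notMem_iff_infDist_pos hne).1 hx
  have hsup : ∀ x ∉ F, ∀ y, dF F x + inner ℝ (‖x - p x‖⁻¹ • (x - p x)) (y - x) ≤ dF F y := by
    intro x hx y
    have h0 := hpos x hx
    simp only [dF]
    rw [(hp x).2.1, (hp y).2.1]
    set z := p y
    have h1 : inner ℝ (x - p x) (y - z) ≤ ‖x - p x‖ * ‖y - z‖ := real_inner_le_norm _ _
    have h2 := (hp x).2.2 z (hp y).1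
    have h3 : inner ℝ (x - p x) (y - x) + ‖x - p x‖ ^ 2 ≤ ‖x - p x‖ * ‖y - z‖ := by
      rw [← real_inner_self_eq_norm_sq, ← inner_add_right]
      have : y - x + (x - p x) = (y - z) + (z - p x) := by abel
      rw [this, inner_add_right]
      linarith
    rw [real_inner_smul_left]
    have h4 : ‖x - p x‖ * (‖x - p x‖ + ‖x - p x‖⁻¹ * inner ℝ (x - p x) (y - x)) ≤ ‖x - p x‖ * ‖y - z‖ := by
      rw [mul_add, mul_inv_cancel_left₀ h0.ne']
      linarith
    exact le_of_mul_le_mul_left h4 h0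
  refine ⟨fun x => ‖x - p x‖⁻¹ • (x - p x), ?_, hsup, ?_, ?_⟩
  · intro x hx
    rw [norm_smul, norm_inv, norm_norm, inv_mul_cancel₀ (hpos x hx).ne']
  · intro x hx
    have h0 := hpos x hx
    have hg : HasFDerivAt (fun y => ‖y - p x‖) (innerSL ℝ (‖x - p x‖⁻¹ • (x - p x))) x := by
      have h1 : HasFDerivAt (fun y => ‖y - p x‖ ^ 2) _ x := ((hasFDerivAt_id x).sub_const (p x)).norm_sq
      have h2 := h1.sqrt (by simpa using h0.ne')
      simp only [Real.sqrt_sq (norm_nonneg _)] at h2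
      refine h2.congr_fderiv ?_
      ext v
      simp
      field_simp
    rw [hasFDerivAt_iff_isLittleO] at hg ⊢
    refine (Asymptotics.isBigO_of_le _ ?_).trans_isLittleO hg
    intro y
    have h1 := hsup x hx y
    have h2 : dF F y ≤ ‖y - p x‖ := by
      rw [← dist_eq_norm]; exact Metric.infDist_le_dist_of_mem (hp x).1
    have h3 : dF F x = ‖x - p x‖ := (hp x).2.1
    simp only [innerSL_apply_apply, Real.norm_eq_abs]
    rw [abs_of_nonneg (by linarith)]
    refine le_trans ?_ (le_abs_self _)
    linarith
  · intro δ hδ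
    refine ⟨⟨2 / δ, by positivity⟩, LipschitzOnWith.of_dist_le_mul ?_⟩
    intro x hx y hy
    simp only [mem_ofPred_eq, dF] at hx hy ⊢
    rw [(hp x).2.1] at hx
    rw [(hp y).2.1] at hy
    have hxy : ‖(x - p x) - (y - p y)‖ ≤ ‖x - y‖ := by
      have h1 := (hp x).2.2 _ (hp y).1
      have h2 := (hp y).2.2 _ (hp x).1
      have h3 : inner ℝ ((x - p x) - (y - p y)) (p x - p y) ≥ 0 := by
        have : p x - p y = - (p y - p x) := by abel
        rw [inner_sub_left]
        nth_rewrite 1 [this]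
        rw [inner_neg_right]; linarith
      have h4 : x - y = ((x - p x) - (y - p y)) + (p x - p y) := by abel
      have h5 := norm_add_sq_real ((x - p x) - (y - p y)) (p x - p y)
      rw [← h4] at h5
      apply le_of_sq_le_sq _ (norm_nonneg _)
      nlinarith [sq_nonneg ‖p x - p y‖]
    rw [dist_eq_norm, dist_eq_norm]
    set u := x - p x
    set v := y - p y
    have hu : 0 < ‖u‖ := by linarith
    have hv : 0 < ‖v‖ := by linarith
    have e : ‖u‖⁻¹ • u - ‖v‖⁻¹ • v = ‖u‖⁻¹ • (u - v) + (‖u‖⁻¹ * (‖v‖ - ‖u‖) * ‖v‖⁻¹) • v := by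
      have : ‖u‖⁻¹ * (‖v‖ - ‖u‖) * ‖v‖⁻¹ = ‖u‖⁻¹ - ‖v‖⁻¹ := by field_simp
      rw [this]; module
    rw [e]
    have e2 : ‖(‖u‖⁻¹ * (‖v‖ - ‖u‖) * ‖v‖⁻¹) • v‖ ≤ ‖u‖⁻¹ * ‖u - v‖ := by
      rw [norm_smul, norm_mul, norm_mul, norm_inv, norm_inv, norm_norm, norm_norm, mul_assoc,
        inv_mul_cancel₀ hv.ne', mul_one]
      gcongr
      rw [norm_sub_rev]
      exact abs_norm_sub_norm_le u v
    have e3 : ‖u‖⁻¹ ≤ δ⁻¹ := by gcongr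
    calc _ ≤ ‖u‖⁻¹ * ‖u - v‖ + ‖u‖⁻¹ * ‖u - v‖ := by
            refine (norm_add_le _ _).trans (add_le_add ?_ e2)
            rw [norm_smul, norm_inv, norm_norm]
      _ ≤ δ⁻¹ * ‖x - y‖ + δ⁻¹ * ‖x - y‖ := by gcongr
      _ = 2 / δ * ‖x - y‖ := by ring
noncomputable def circ (c : E2) (R : ℝ) (t : ℝ) : E2 := c + !₂[R * Real.cos t, R * Real.sin t]

lemma circ_lip (c : E2) (R : ℝ) (hR : 0 ≤ R) : LipschitzWith ⟨R, hR⟩ (circ c R) := by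
  refine LipschitzWith.of_dist_le_mul ?_
  intro s t
  rw [circ, circ, dist_add_left, EuclideanSpace.dist_eq]
  apply Real.sqrt_le_iff.2
  refine ⟨by positivity, ?_⟩
  simp only [Fin.sum_univ_two, Real.dist_eq, sq_abs, mul_pow]
  simp
  have h := Real.one_sub_sq_div_two_le_cos (x := s - t)
  rw [Real.cos_sub] at h
  have h1 := Real.sin_sq_add_cos_sq s
  have h2 := Real.sin_sq_add_cos_sq t
  have : (R * Real.cos s - R * Real.cos t) ^ 2 + (R * Real.sin s - R * Real.sin t) ^ 2
    = R ^ 2 * (2 - 2 * (Real.cos s * Real.cos t + Real.sin s * Real.sin t)) := by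
    linear_combination R ^ 2 * h1 + R ^ 2 * h2
  rw [this]
  exact mul_le_mul_of_nonneg_left (by linarith) (sq_nonneg R)

lemma circ_inj (c : E2) (R : ℝ) (hR : 0 < R) : InjOn (circ c R) (Ico 0 (2 * Real.pi)) := by
  intro s hs t ht h
  simp only [circ, add_right_inj] at h
  have h0 := congrArg (fun v : E2 => v 0) h
  have h1 := congrArg (fun v : E2 => v 1) h
  simp [hR.ne'] at h0 h1
  have : Real.cos (s - t) = 1 := by
    rw [Real.cos_sub, h0, h1]; nlinarith [Real.sin_sq_add_cos_sq t]
  have := (Real.cos_eq_one_iff_of_lt_of_lt (by linarith [hs.1, ht.2]) (by linarith [hs.2, ht.1])).1 this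
  linarith

lemma circ_mem (c : E2) (R : ℝ) (hR : 0 < R) (t : ℝ) : circ c R t ∈ Metric.sphere c R := by
  rw [mem_sphere_iff_norm, circ, add_sub_cancel_left, EuclideanSpace.norm_eq]
  simp [Fin.sum_univ_two, mul_pow, ← mul_add, Real.sqrt_sq hR.le]

lemma sphere_sub (c : E2) (R : ℝ) (hR : 0 < R) :
    Metric.sphere c R ⊆ circ c R '' Icc (-Real.pi) Real.pi := by
  intro x hx
  rw [mem_sphere_iff_norm, EuclideanSpace.norm_eq] at hx
  simp [Fin.sum_univ_two] at hx
  set z : ℂ := ⟨x 0 - c 0, x 1 - c 1⟩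
  have hz : ‖z‖ = R := by
    rw [Complex.norm_def, Complex.normSq_mk, ← hx]; congr 1; ring
  refine ⟨z.arg, ⟨(Complex.neg_pi_lt_arg z).le, Complex.arg_le_pi z⟩, ?_⟩
  have h1 := Complex.norm_mul_cos_arg z
  have h2 := Complex.norm_mul_sin_arg z
  rw [hz] at h1 h2
  ext i
  fin_cases i
  · simp [circ, h1, z]
  · simp [circ, h2, z]

lemma sphere_fin (c : E2) (R : ℝ) (hR : 0 < R) : μH[1] (Metric.sphere c R) ≠ ∞ := by
  have h := (circ_lip c R hR.le).lipschitzOnWith (s := Icc (-Real.pi) Real.pi) |>.hausdorffMeasure_image_le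
    (d := 1) zero_le_one
  rw [hausdorffMeasure_real] at h
  refine ne_top_of_le_ne_top ?_ ((measure_mono (sphere_sub c R hR)).trans h)
  exact ENNReal.mul_ne_top (by simp only [ENNReal.rpow_one]; exact ENNReal.coe_ne_top) (by simp)

lemma arc_ge (c : E2) (R : ℝ) (m h : ℝ) (h0 : 0 ≤ h) :
    ENNReal.ofReal (2 * R * Real.sin h) ≤ μH[1] (circ c R '' Ico (m - h) (m + h)) := by
  set τ : E2 := !₂[-Real.sin m, Real.cos m]
  have hτ : ‖τ‖ = 1 := by
    rw [EuclideanSpace.norm_eq]; simp [Fin.sum_univ_two, τ]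
  set l : E2 → ℝ := fun x => inner ℝ τ (x - c)
  have hl : LipschitzWith 1 l := by
    refine LipschitzWith.of_dist_le_mul fun x y => ?_
    simp only [l, Real.dist_eq, ← inner_sub_right, NNReal.coe_one]
    refine (abs_real_inner_le_norm _ _).trans ?_
    rw [hτ, dist_eq_norm]; simp
  have hc := hl.lipschitzOnWith (s := circ c R '' Ico (m - h) (m + h)) |>.hausdorffMeasure_image_le
    (d := 1) zero_le_one
  rw [hausdorffMeasure_real] at hc
  simp only [ENNReal.coe_one, ENNReal.one_rpow, one_mul] at hc
  refine le_trans ?_ hc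
  have hsub : Ico (-(R * Real.sin h)) (R * Real.sin h) ⊆ l '' (circ c R '' Ico (m - h) (m + h)) := by
    rw [image_image]
    have e : ∀ t, l (circ c R t) = R * Real.sin (t - m) := by
      intro t
      simp [l, circ, τ, PiLp.inner_apply, Fin.sum_univ_two, Real.sin_sub]
      ring
    simp only [e]
    have := intermediate_value_Ico (a := m - h) (b := m + h) (f := fun t => R * Real.sin (t - m))
      (by linarith) (by fun_prop)
    simpa using this
  refine le_trans ?_ (measure_mono hsub)
  rw [Real.volume_Ico]
  apply ENNReal.ofReal_le_ofReal
  linarith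

lemma sphere_ge (c : E2) (R : ℝ) (hR : 0 < R) :
    ENNReal.ofReal (2 * Real.pi * R) ≤ μH[1] (Metric.sphere c R) := by
  have key : ∀ N : ℕ, 2 ≤ N → ENNReal.ofReal (N * (2 * R * Real.sin (Real.pi / N))) ≤
      μH[1] (Metric.sphere c R) := by
    intro N hN
    have hN0 : (0 : ℝ) < N := by positivity
    have hN2 : (2 : ℝ) ≤ N := by exact_mod_cast hN
    set h := Real.pi / N
    have hh : 0 < h := by positivity
    have hNh : N * h = Real.pi := by simp only [h]; field_simp
    have hh2 : h ≤ Real.pi / 2 := by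
      simp only [h]; gcongr
    set A : ℕ → Set ℝ := fun k => Ico ((2 * k + 1) * h - h) ((2 * k + 1) * h + h)
    have hA : ∀ k ∈ Finset.range N, A k ⊆ Ico 0 (2 * Real.pi) := by
      intro k hk
      have hk' : (k : ℝ) + 1 ≤ N := by exact_mod_cast Finset.mem_range.1 hk
      apply Ico_subset_Ico
      · have : (0 : ℝ) ≤ k := by positivity
        nlinarith
      · nlinarith
    have hdis : ∀ j k : ℕ, j < k → Disjoint (A j) (A k) := by
      intro j k hjk
      have : (j : ℝ) + 1 ≤ k := by exact_mod_cast hjk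
      rw [Set.disjoint_left]
      rintro x ⟨_, hx⟩ ⟨hx', _⟩
      nlinarith
    have hd : (Finset.range N : Set ℕ).PairwiseDisjoint (fun k => circ c R '' A k) := by
      intro j hj k hk hjk
      have hAA : Disjoint (A j) (A k) := by
        rcases lt_or_gt_of_ne hjk with h | h
        · exact hdis _ _ h
        · exact (hdis _ _ h).symm
      rw [Function.onFun, Set.disjoint_left]
      rintro x ⟨s, hs, rfl⟩ ⟨t, ht, hst⟩
      have := circ_inj c R hR (hA k (Finset.mem_coe.1 hk) ht) (hA j (Finset.mem_coe.1 hj) hs) hst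
      subst this
      exact Set.disjoint_left.1 hAA hs ht
    have hm : ∀ k ∈ Finset.range N, MeasurableSet (circ c R '' A k) := fun k hk =>
      measurableSet_Ico.image_of_continuousOn_injOn (circ_lip c R hR.le).continuous.continuousOn
        ((circ_inj c R hR).mono (hA k hk))
    have hs := measure_biUnion_finset (μ := (μH[1] : Measure E2)) hd hm
    calc _ = ∑ k ∈ Finset.range N, ENNReal.ofReal (2 * R * Real.sin h) := by
            rw [Finset.sum_const, Finset.card_range, nsmul_eq_mul,
              ENNReal.ofReal_mul hN0.le, ENNReal.ofReal_natCast]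
      _ ≤ ∑ k ∈ Finset.range N, μH[1] (circ c R '' A k) :=
            Finset.sum_le_sum fun k _ => arc_ge c R _ h hh.le
      _ = _ := hs.symm
      _ ≤ _ := measure_mono (by
            simp only [iUnion_subset_iff]
            rintro k _ _ ⟨t, _, rfl⟩
            exact circ_mem c R hR t)
  have hlim : Tendsto (fun N : ℕ => (N : ℝ) * (2 * R * Real.sin (Real.pi / N))) atTop
      (𝓝 (2 * Real.pi * R)) := by
    have h1 : Tendsto (fun N : ℕ => Real.pi / (N : ℝ)) atTop (𝓝 0) :=
      tendsto_const_div_atTop_nhds_zero_nat _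
    have h2 : Tendsto (fun N : ℕ => Real.sinc (Real.pi / (N : ℝ))) atTop (𝓝 1) := by
      have := (Real.continuous_sinc.tendsto 0).comp h1
      simpa [Function.comp_def] using this
    have h3 := h2.const_mul (2 * Real.pi * R)
    rw [mul_one] at h3
    refine h3.congr' ?_
    filter_upwards [eventually_gt_atTop 0] with N hN
    have hN0 : (0 : ℝ) < N := by exact_mod_cast hN
    rw [Real.sinc_of_ne_zero (by positivity)]
    field_simp
  exact le_of_tendsto (ENNReal.tendsto_ofReal hlim)
    (by filter_upwards [eventually_ge_atTop 2] with N hN using key N hN)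

lemma sphere_toReal (c : E2) (R : ℝ) (hR : 0 < R) :
    2 * Real.pi * R ≤ (μH[1] (Metric.sphere c R)).toReal := by
  rw [← ENNReal.ofReal_le_iff_le_toReal (sphere_fin c R hR)]
  exact sphere_ge c R hR

lemma dir_ge (g : E2 → ℝ) (x v : E2) (C : ℝ) (hd : DifferentiableAt ℝ g x)
    (h : ∀ᶠ t : ℝ in 𝓝[>] 0, g x - C * t ≤ g (x + t • v)) : -C ≤ fderiv ℝ g x v := by
  have h1 := (hd.hasFDerivAt.hasLineDerivAt v).tendsto_slope_zero_right
  refine ge_of_tendsto h1 ?_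
  filter_upwards [h, self_mem_nhdsWithin] with t ht ht0
  have ht0 : 0 < t := ht0
  rw [smul_eq_mul, inv_mul_eq_div, le_div_iff₀ ht0]
  linarith

lemma tend_line (x v : E2) : Tendsto (fun t : ℝ => x + t • v) (𝓝[>] 0) (𝓝 x) := by
  have : Continuous (fun t : ℝ => x + t • v) := by fun_prop
  have h := (this.tendsto 0).mono_left (nhdsWithin_le_nhds (s := Ioi 0))
  simpa using h

lemma lap_nonneg (F : Set E2) (hFc : IsClosed F) (hFconv : Convex ℝ F) (hne : F.Nonempty)
    (x : E2) (hx : x ∉ F) : 0 ≤ lap (dF F) x := by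
  obtain ⟨n, h1, h2, h3, h4⟩ := normal_exists F hFc hFconv hne
  apply Finset.sum_nonneg
  intro i _
  set e := EuclideanSpace.basisFun (Fin 2) ℝ i
  by_cases hd : DifferentiableAt ℝ (fun y => fderiv ℝ (dF F) y e) x
  · have := dir_ge _ x e 0 hd ?_
    · simpa using this
    · filter_upwards [(tend_line x e).eventually (hFc.isOpen_compl.mem_nhds hx),
        self_mem_nhdsWithin] with t ht ht0
      have ht0 : 0 < t := ht0
      have ht : x + t • e ∉ F := ht
      rw [(h3 x hx).fderiv, (h3 _ ht).fderiv]
      have a := h2 x hx (x + t • e)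
      have b := h2 _ ht x
      simp only [innerSL_apply_apply, zero_mul, sub_zero]
      have e1 : x + t • e - x = t • e := by abel
      have e2 : x - (x + t • e) = (-t) • e := by module
      rw [e1, real_inner_smul_right] at a
      rw [e2, real_inner_smul_right] at b
      have : t * inner ℝ (n x) e ≤ t * inner ℝ (n (x + t • e)) e := by linarith
      exact le_of_mul_le_mul_left this ht0
  · rw [fderiv_zero_of_not_differentiableAt hd]; simp

noncomputable def cut (F : Set E2) (c : E2) (R η ε : ℝ) (x : E2) : ℝ :=
  max 0 (min 1 (min ((R - ‖x - c‖) / ε) ((dF F x - η - ε) / ε)))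

lemma cut_nonneg (F : Set E2) (c : E2) (R η ε : ℝ) (x : E2) : 0 ≤ cut F c R η ε x :=
  le_max_left _ _

lemma cut_zero_out (F : Set E2) (c : E2) (R η ε : ℝ) (hε : 0 < ε) (x : E2) (hx : R ≤ ‖x - c‖) :
    cut F c R η ε x = 0 := by
  apply max_eq_left
  refine (min_le_right _ _).trans ((min_le_left _ _).trans ?_)
  exact div_nonpos_of_nonpos_of_nonneg (by linarith) hε.le

lemma cut_zero_in (F : Set E2) (c : E2) (R η ε : ℝ) (hε : 0 < ε) (x : E2) (hx : dF F x ≤ η + ε) :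
    cut F c R η ε x = 0 := by
  apply max_eq_left
  refine (min_le_right _ _).trans ((min_le_right _ _).trans ?_)
  exact div_nonpos_of_nonpos_of_nonneg (by linarith) hε.le

lemma cut_lip (F : Set E2) (c : E2) (R η ε : ℝ) (hε : 0 < ε) :
    LipschitzWith ⟨ε⁻¹, by positivity⟩ (cut F c R η ε) := by
  have l1 : LipschitzWith ⟨ε⁻¹, by positivity⟩ (fun x : E2 => (R - ‖x - c‖) / ε) := by
    refine LipschitzWith.of_dist_le_mul fun x y => ?_
    change _ ≤ ε⁻¹ * _
    rw [Real.dist_eq, ← sub_div, abs_div, abs_of_pos hε, div_eq_inv_mul]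
    gcongr
    rw [dist_eq_norm]
    have := abs_norm_sub_norm_le (y - c) (x - c)
    rw [sub_sub_sub_cancel_right, norm_sub_rev y x] at this
    have e : R - ‖x - c‖ - (R - ‖y - c‖) = ‖y - c‖ - ‖x - c‖ := by ring
    rw [e]; exact this
  have l2 : LipschitzWith ⟨ε⁻¹, by positivity⟩ (fun x : E2 => (dF F x - η - ε) / ε) := by
    refine LipschitzWith.of_dist_le_mul fun x y => ?_
    change _ ≤ ε⁻¹ * _
    rw [Real.dist_eq, ← sub_div, abs_div, abs_of_pos hε, div_eq_inv_mul]
    gcongr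
    have := (Metric.lipschitz_infDist_pt F).dist_le_mul x y
    rw [Real.dist_eq] at this
    simp only [NNReal.coe_one, one_mul] at this
    have e : dF F x - η - ε - (dF F y - η - ε) = Metric.infDist x F - Metric.infDist y F := by
      simp only [dF]; ring
    rw [e]; exact this
  have := ((l1.min l2).const_min 1).const_max 0
  exact this.weaken (max_le le_rfl le_rfl)

lemma cut_supp (F : Set E2) (c : E2) (R η ε : ℝ) (hε : 0 < ε) :
    HasCompactSupport (cut F c R η ε) := by
  refine HasCompactSupport.intro (isCompact_closedBall c R) fun x hx => ?_
  apply cut_zero_out _ _ _ _ _ hε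
  rw [Metric.mem_closedBall, dist_eq_norm] at hx
  linarith

lemma cut_dir (F : Set E2) (c : E2) (R η ε : ℝ) (hε : 0 < ε) (x v : E2) (hv : ‖v‖ = 1)
    (hF : ∀ y, dF F x + inner ℝ v (y - x) ≤ dF F y)
    (hd : DifferentiableAt ℝ (cut F c R η ε) x) :
    - fderiv ℝ (cut F c R η ε) x v ≤
      (Metric.closedBall c R \ Metric.ball c (R - ε)).indicator (fun _ => ε⁻¹) x := by
  have hup : ∀ t : ℝ, t > 0 → dF F x ≤ dF F (x + t • v) := by
    intro t ht
    have := hF (x + t • v)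
    rw [add_sub_cancel_left, real_inner_smul_right, real_inner_self_eq_norm_sq, hv] at this
    linarith
  by_cases hx : x ∈ Metric.closedBall c R \ Metric.ball c (R - ε)
  · rw [indicator_of_mem hx]
    have := dir_ge _ x v ε⁻¹ hd ?_
    · linarith
    filter_upwards [self_mem_nhdsWithin] with t ht
    have ht : 0 < t := ht
    have := (cut_lip F c R η ε hε).dist_le_mul x (x + t • v)
    rw [Real.dist_eq, dist_self_add_right, norm_smul, hv, mul_one, Real.norm_eq_abs, abs_of_pos ht] at this
    change _ ≤ ε⁻¹ * t at this
    linarith [le_abs_self (cut F c R η ε x - cut F c R η ε (x + t • v))]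
  · rw [indicator_of_notMem hx]
    have := dir_ge _ x v 0 hd ?_
    · linarith
    by_cases hx1 : x ∈ Metric.closedBall c R
    · have hx2 : x ∈ Metric.ball c (R - ε) := by by_contra h; exact hx ⟨hx1, h⟩
      filter_upwards [self_mem_nhdsWithin,
        (tend_line x v).eventually (Metric.isOpen_ball.mem_nhds hx2)] with t ht ht2
      have ht2 : x + t • v ∈ Metric.ball c (R - ε) := ht2
      rw [mem_ball_iff_norm] at ht2
      have h1 : 1 ≤ (R - ‖x + t • v - c‖) / ε := by
        rw [le_div_iff₀ hε]; linarith
      have h2 : (dF F x - η - ε) / ε ≤ (dF F (x + t • v) - η - ε) / ε := by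
        have := hup t ht
        gcongr
      rw [zero_mul, sub_zero]
      unfold cut
      apply max_le_max le_rfl
      refine le_min (min_le_left _ _) (le_min ((min_le_left _ _).trans h1) ?_)
      exact (min_le_right _ _).trans ((min_le_right _ _).trans h2)
    · filter_upwards with t
      rw [cut_zero_out F c R η ε hε x, zero_mul, sub_zero]
      · exact cut_nonneg _ _ _ _ _ _
      · rw [Metric.mem_closedBall, dist_eq_norm] at hx1
        linarith

lemma lap_meas (F : Set E2) : Measurable (lap (dF F)) := by
  unfold lap
  exact Finset.measurable_sum _ fun i _ => measurable_fderiv_apply_const ℝ _ _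

lemma annulus_vol (c : E2) (R ε : ℝ) (hε : 0 < ε) (hεR : ε < R) :
    (volume (Metric.closedBall c R \ Metric.ball c (R - ε))).toReal * ε⁻¹ ≤ 2 * Real.pi * R := by
  rw [measure_sdiff ((Metric.ball_subset_ball (by linarith)).trans Metric.ball_subset_closedBall)
    Metric.isOpen_ball.measurableSet.nullMeasurableSet (by simp [ENNReal.mul_eq_top]),
    EuclideanSpace.volume_closedBall_fin_two, EuclideanSpace.volume_ball_fin_two,
    ← ENNReal.ofReal_pow (by linarith), ← ENNReal.ofReal_pow (by linarith),
    ← ENNReal.ofReal_mul (by positivity), ← ENNReal.ofReal_mul (by positivity),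
    ← ENNReal.ofReal_sub _ (by positivity), ENNReal.toReal_ofReal, ← div_eq_mul_inv,
    div_le_iff₀ hε]
  · nlinarith [Real.pi_pos, mul_pos Real.pi_pos (mul_pos hε hε)]
  · rw [← sub_mul]
    refine mul_nonneg ?_ Real.pi_pos.le
    nlinarith

lemma cut_integral (F : Set E2) (hFc : IsClosed F) (hFconv : Convex ℝ F) (hne : F.Nonempty)
    (c : E2) (R η ε : ℝ) (hη : 0 ≤ η) (hε : 0 < ε) (hεR : ε < R) :
    ∫⁻ x, ENNReal.ofReal (cut F c R η ε x * lap (dF F) x) ≤ ENNReal.ofReal (2 * Real.pi * R) := by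
  obtain ⟨n, h1, h2, h3, h4⟩ := normal_exists F hFc hFconv hne
  obtain ⟨L, hL⟩ := h4 (ε / 2) (by positivity)
  set φ := cut F c R η ε
  have hφl : LipschitzWith ⟨ε⁻¹, by positivity⟩ φ := cut_lip F c R η ε hε
  have hφs : HasCompactSupport φ := cut_supp F c R η ε hε
  have hdc : Continuous (dF F) := Metric.continuous_infDist_pt F
  have hnF : ∀ x, 0 < dF F x → x ∉ F := fun x hx =>
    (hFc.notMem_iff_infDist_pos hne).2 hx
  set e : Fin 2 → E2 := fun i => EuclideanSpace.basisFun (Fin 2) ℝ i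
  have hne' : ∀ (v : E2) i, inner ℝ v (e i) = v i := by
    intro v i
    simp [e, PiLp.inner_apply]
  have hG : ∀ i : Fin 2, ∃ G : E2 → ℝ, LipschitzWith L G ∧
      EqOn (fun x => n x i) G {x | ε / 2 ≤ dF F x} := by
    intro i
    apply LipschitzOnWith.extend_real
    refine LipschitzOnWith.of_dist_le_mul fun x hx y hy => ?_
    refine le_trans ?_ (hL.dist_le_mul x hx y hy)
    rw [dist_eq_norm, dist_eq_norm]
    exact PiLp.norm_apply_le (n x - n y) i
  choose G hGl hGe using hG
  -- the Laplacian through the extensions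
  have hlap : ∀ x, ε / 2 < dF F x → lap (dF F) x = ∑ i, fderiv ℝ (G i) x (e i) := by
    intro x hx
    apply Finset.sum_congr rfl
    intro i _
    have : (fun y => fderiv ℝ (dF F) y (e i)) =ᶠ[𝓝 x] G i := by
      filter_upwards [(isOpen_lt continuous_const hdc).mem_nhds hx] with y hy
      have hy : ε / 2 < dF F y := hy
      rw [(h3 y (hnF y (by linarith))).fderiv, innerSL_apply_apply, hne']
      exact hGe i hy.le
    change fderiv ℝ (fun y => fderiv ℝ (dF F) y (e i)) x (e i) = _
    rw [this.fderiv_eq]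
  have hGd : ∀ᵐ x : E2, ∀ i, DifferentiableAt ℝ (G i) x :=
    ae_all_iff.2 fun i => (hGl i).ae_differentiableAt
  have hφd : ∀ᵐ x : E2, DifferentiableAt ℝ φ x := hφl.ae_differentiableAt
  have heq : (fun x => φ x * lap (dF F) x) =ᵐ[volume]
      fun x => ∑ i, lineDeriv ℝ (G i) x (e i) * φ x := by
    filter_upwards [hGd] with x hx
    by_cases hd : ε / 2 < dF F x
    · rw [hlap x hd, mul_comm, Finset.sum_mul]
      simp only [(hx _).lineDeriv_eq_fderiv]
    · have : φ x = 0 := cut_zero_in F c R η ε hε x (by linarith)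
      simp [this]
  have hφi : Integrable φ := hφl.continuous.integrable_of_hasCompactSupport hφs
  have hi1 : ∀ i, Integrable (fun x => lineDeriv ℝ (G i) x (e i) * φ x) := fun i =>
    hφi.bdd_mul (aestronglyMeasurable_lineDeriv (hGl i).continuous volume)
      (.of_forall fun x => norm_lineDeriv_le_of_lipschitz ℝ (hGl i))
  have hi2 : ∀ i, Integrable (fun x => lineDeriv ℝ φ x (-e i) * G i x) := by
    intro i
    have hK : Integrable ((Metric.closedBall c R).indicator (G i)) :=
      ((hGl i).continuous.continuousOn.integrableOn_compact (isCompact_closedBall c R)).integrable_indicator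
        Metric.isClosed_closedBall.measurableSet
    have := hK.bdd_mul (aestronglyMeasurable_lineDeriv (v := -e i) hφl.continuous volume)
      (.of_forall fun x => norm_lineDeriv_le_of_lipschitz ℝ hφl)
    refine this.congr (.of_forall fun x => ?_)
    by_cases hx : x ∈ Metric.closedBall c R
    · simp [hx]
    · have h0 : φ =ᶠ[𝓝 x] fun _ => 0 := by
        filter_upwards [Metric.isClosed_closedBall.isOpen_compl.mem_nhds hx] with y hy
        apply cut_zero_out _ _ _ _ _ hε
        rw [mem_compl_iff, Metric.mem_closedBall, dist_eq_norm] at hy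
        linarith
      have h5 : lineDeriv ℝ φ x (-e i) = 0 := by rw [h0.lineDeriv_eq]; simp [lineDeriv]
      simp [h5]
  have hint : Integrable (fun x => φ x * lap (dF F) x) :=
    (integrable_finsetSum _ fun i _ => hi1 i).congr heq.symm
  have hnn : ∀ x, 0 ≤ φ x * lap (dF F) x := by
    intro x
    by_cases hd : 0 < dF F x
    · exact mul_nonneg (cut_nonneg _ _ _ _ _ _) (lap_nonneg F hFc hFconv hne x (hnF x hd))
    · have : φ x = 0 := cut_zero_in F c R η ε hε x (by linarith)
      simp [this]
  rw [← ofReal_integral_eq_lintegral_ofReal hint (.of_forall hnn)]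
  apply ENNReal.ofReal_le_ofReal
  have hAm : MeasurableSet (Metric.closedBall c R \ Metric.ball c (R - ε)) :=
    Metric.isClosed_closedBall.measurableSet.diff Metric.isOpen_ball.measurableSet
  have hAf : volume (Metric.closedBall c R \ Metric.ball c (R - ε)) ≠ ∞ :=
    ne_top_of_le_ne_top (by simp [ENNReal.mul_eq_top]) (measure_mono (sdiff_subset (s := Metric.closedBall c R)))
  calc ∫ x, φ x * lap (dF F) x = ∫ x, ∑ i, lineDeriv ℝ (G i) x (e i) * φ x := integral_congr_ae heq
    _ = ∑ i, ∫ x, lineDeriv ℝ (G i) x (e i) * φ x := integral_finsetSum _ fun i _ => hi1 i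
    _ = ∑ i, ∫ x, lineDeriv ℝ φ x (-e i) * G i x :=
        Finset.sum_congr rfl fun i _ => (hGl i).integral_lineDeriv_mul_eq hφl hφs (e i)
    _ = ∫ x, ∑ i, lineDeriv ℝ φ x (-e i) * G i x := (integral_finsetSum _ fun i _ => hi2 i).symm
    _ ≤ ∫ x, (Metric.closedBall c R \ Metric.ball c (R - ε)).indicator (fun _ => ε⁻¹) x := by
        refine integral_mono_ae (integrable_finsetSum _ fun i _ => hi2 i)
          ((integrable_indicator_iff hAm).2 (integrableOn_const hAf)) ?_
        filter_upwards [hφd] with x hx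
        by_cases hd : ε / 2 < dF F x
        · have hxF := hnF x (by linarith)
          refine le_trans (le_of_eq ?_) (cut_dir F c R η ε hε x (n x) (h1 x hxF) (h2 x hxF) hx)
          have hsum : n x = ∑ i, n x i • e i := by
            have := (EuclideanSpace.basisFun (Fin 2) ℝ).sum_repr (n x)
            simpa [e] using this.symm
          conv_rhs => rw [hsum]
          rw [map_sum, ← Finset.sum_neg_distrib]
          apply Finset.sum_congr rfl
          intro i _
          rw [hx.lineDeriv_eq_fderiv, map_neg, map_smul, smul_eq_mul, ← hGe i hd.le]
          simp only [φ]
          ring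
        · have h0 : φ =ᶠ[𝓝 x] fun _ => 0 := by
            have hd' : dF F x < η + ε := by linarith
            filter_upwards [(isOpen_lt hdc continuous_const).mem_nhds hd'] with y hy
            exact cut_zero_in F c R η ε hε y (le_of_lt hy)
          have h5 : ∀ i, lineDeriv ℝ φ x (-e i) = 0 := fun i => by
            rw [h0.lineDeriv_eq]; simp [lineDeriv]
          simp only [h5, zero_mul, Finset.sum_const_zero]
          exact indicator_nonneg (fun _ _ => by positivity) x
    _ = (volume (Metric.closedBall c R \ Metric.ball c (R - ε))).toReal * ε⁻¹ := by
        rw [integral_indicator hAm, setIntegral_const, smul_eq_mul, measureReal_def]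
    _ ≤ _ := annulus_vol c R ε hε hεR

lemma lap_lintegral (F : Set E2) (hFc : IsClosed F) (hFconv : Convex ℝ F) (hne : F.Nonempty)
    (c : E2) (R η : ℝ) (hη : 0 ≤ η) (hR : 0 < R) :
    ∫⁻ x in Metric.ball c R \ {y | Metric.infDist y F ≤ η}, ENNReal.ofReal (lap (dF F) x) ≤
      ENNReal.ofReal (2 * Real.pi * R) := by
  set U := Metric.ball c R \ {y | Metric.infDist y F ≤ η}
  have hdc : Continuous (dF F) := Metric.continuous_infDist_pt F
  have hU : MeasurableSet U := Metric.isOpen_ball.measurableSet.diff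
    (isClosed_le hdc continuous_const).measurableSet
  set s : ℕ → ℝ := fun k => R / (k + 2)
  have hs0 : ∀ k, 0 < s k := fun k => by positivity
  have hsR : ∀ k, s k < R := fun k => by
    have : (0 : ℝ) ≤ k := by positivity
    exact div_lt_self hR (by linarith)
  have hst : Tendsto s atTop (𝓝 0) :=
    tendsto_const_nhds.div_atTop
      (tendsto_atTop_add_const_right _ _ tendsto_natCast_atTop_atTop)
  set f : ℕ → E2 → ℝ≥0∞ := fun k x => ENNReal.ofReal (cut F c R η (s k) x * lap (dF F) x)
  have hf : ∀ k, Measurable (f k) := fun k =>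
    (((cut_lip F c R η (s k) (hs0 k)).continuous.measurable).mul (lap_meas F)).ennreal_ofReal
  calc _ ≤ ∫⁻ x in U, liminf (fun k => f k x) atTop := by
          refine setLIntegral_mono' hU fun x hx => ?_
          have hx1 : 0 < R - ‖x - c‖ := by
            have := hx.1; rw [mem_ball_iff_norm] at this; linarith
          have hx2 : 0 < (dF F x - η) / 2 := by
            have h : ¬ (Metric.infDist x F ≤ η) := hx.2
            unfold dF; linarith
          have : (fun k => f k x) =ᶠ[atTop] fun _ => ENNReal.ofReal (lap (dF F) x) := by
            filter_upwards [hst.eventually (gt_mem_nhds hx1), hst.eventually (gt_mem_nhds hx2)]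
              with k hk1 hk2
            have hk1 : s k < R - ‖x - c‖ := hk1
            have hk2 : s k < (dF F x - η) / 2 := hk2
            have : cut F c R η (s k) x = 1 := by
              unfold cut
              rw [min_eq_left (le_min _ _)]
              · simp
              · rw [le_div_iff₀ (hs0 k)]; linarith
              · rw [le_div_iff₀ (hs0 k)]; linarith
            simp only [f, this, one_mul]
          rw [liminf_congr this, liminf_const]
    _ ≤ ∫⁻ x, liminf (fun k => f k x) atTop := setLIntegral_le_lintegral _ _
    _ ≤ liminf (fun k => ∫⁻ x, f k x) atTop := lintegral_liminf_le hf
    _ ≤ liminf (fun _ : ℕ => ENNReal.ofReal (2 * Real.pi * R)) atTop :=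
          liminf_le_liminf (.of_forall fun k =>
            cut_integral F hFc hFconv hne c R η (s k) hη (hs0 k) (hsR k))
    _ = _ := liminf_const _

lemma lap_integrable (F : Set E2) (hFc : IsClosed F) (hFconv : Convex ℝ F) (hne : F.Nonempty)
    (c : E2) (R η : ℝ) (hη : 0 ≤ η) (hR : 0 < R) :
    IntegrableOn (lap (dF F)) (Metric.ball c R \ {y | Metric.infDist y F ≤ η}) ∧
    ∫ x in Metric.ball c R \ {y | Metric.infDist y F ≤ η}, lap (dF F) x ≤ 2 * Real.pi * R := by
  have h := lap_lintegral F hFc hFconv hne c R η hη hR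
  have hdc : Continuous (dF F) := Metric.continuous_infDist_pt F
  have hU : MeasurableSet (Metric.ball c R \ {y | Metric.infDist y F ≤ η}) :=
    Metric.isOpen_ball.measurableSet.diff (isClosed_le hdc continuous_const).measurableSet
  have hnn : ∀ᵐ x ∂(volume.restrict (Metric.ball c R \ {y | Metric.infDist y F ≤ η})),
      0 ≤ lap (dF F) x := by
    refine (ae_restrict_iff' hU).2 (.of_forall fun x hx => ?_)
    apply lap_nonneg F hFc hFconv hne
    rw [hFc.notMem_iff_infDist_pos hne]
    have h : ¬ (Metric.infDist x F ≤ η) := hx.2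
    linarith
  refine ⟨⟨(lap_meas F).aestronglyMeasurable, ?_⟩, ?_⟩
  · rw [hasFiniteIntegral_iff_ofReal hnn]
    exact h.trans_lt ENNReal.ofReal_lt_top
  · rw [integral_eq_lintegral_of_nonneg_ae hnn (lap_meas F).aestronglyMeasurable]
    exact ENNReal.toReal_le_of_le_ofReal (by positivity) h

/-- For a bounded closed convex `F ⊆ ℝ²`: the distance function `d_F` is
`C^{1,1}_loc` outside `F`, its Laplacian is nonnegative a.e. outside `F` and is
integrable on `B \ F` for every ball `B ⊇ F`, with the integral bound
`∫_{B \ F_η⁺} Δd_F ≤ H¹(∂B) + H¹(∂(F_η⁺))` for every `η > 0`. -/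
theorem stmt_12 (F : Set E2) (hFb : IsBounded F) (hFc : IsClosed F) (hFconv : Convex ℝ F) :
    (∀ x ∉ F, ∃ ε > 0, ∃ L : ℝ≥0,
        Metric.ball x ε ⊆ Fᶜ ∧
        DifferentiableOn ℝ (dF F) (Metric.ball x ε) ∧
        LipschitzOnWith L (fun y => fderiv ℝ (dF F) y) (Metric.ball x ε)) ∧
    (∀ᵐ x ∂(volume : Measure E2), x ∉ F → 0 ≤ lap (dF F) x) ∧
    (∀ (c : E2) (R : ℝ), F ⊆ Metric.ball c R →
        IntegrableOn (lap (dF F)) (Metric.ball c R \ F)) ∧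
    (∀ (c : E2) (R : ℝ), F ⊆ Metric.ball c R → ∀ η > 0,
        ∫ x in Metric.ball c R \ {y | Metric.infDist y F ≤ η}, lap (dF F) x ≤
          (μH[1] (Metric.sphere c R)).toReal
            + (μH[1] (frontier {y | Metric.infDist y F ≤ η})).toReal) := by
  rcases F.eq_empty_or_nonempty with rfl | hne
  · have hd : dF (∅ : Set E2) = fun _ => 0 := by
      funext x; simp [dF]
    have hl : lap (dF (∅ : Set E2)) = fun _ => 0 := by
      funext x; simp [lap, hd]
    refine ⟨fun x _ => ⟨1, one_pos, 0, by simp, ?_, ?_⟩, ?_, ?_, ?_⟩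
    · rw [hd]; exact differentiableOn_const _
    · rw [hd]; simp only [fderiv_fun_const]; exact LipschitzWith.const' _ |>.lipschitzOnWith
    · simp [hl]
    · intro c R _; rw [hl]; exact integrableOn_zero
    · intro c R _ η _
      rw [hl, integral_zero]
      positivity
  · have hRp : ∀ (c : E2) (R : ℝ), F ⊆ Metric.ball c R → 0 < R := by
      intro c R h
      obtain ⟨z, hz⟩ := hne
      exact Metric.pos_of_mem_ball (h hz)
    refine ⟨?_, .of_forall fun x hx => lap_nonneg F hFc hFconv hne x hx, ?_, ?_⟩
    · intro x hx
      obtain ⟨n, h1, h2, h3, h4⟩ := normal_exists F hFc hFconv hne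
      have hd : 0 < dF F x := (hFc.notMem_iff_infDist_pos hne).1 hx
      obtain ⟨L, hL⟩ := h4 (dF F x / 2) (by positivity)
      have hb : ∀ y ∈ Metric.ball x (dF F x / 2), dF F x / 2 ≤ dF F y := by
        intro y hy
        have h5 : dF F x ≤ dF F y + dist x y := Metric.infDist_le_infDist_add_dist
        rw [Metric.mem_ball, dist_comm] at hy
        linarith
      have hbF : ∀ y ∈ Metric.ball x (dF F x / 2), y ∉ F := by
        intro y hy
        rw [hFc.notMem_iff_infDist_pos hne]
        exact lt_of_lt_of_le (by positivity) (hb y hy)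
      refine ⟨dF F x / 2, by positivity, L, hbF,
        fun y hy => (h3 y (hbF y hy)).differentiableAt.differentiableWithinAt, ?_⟩
      refine LipschitzOnWith.of_dist_le_mul fun y hy z hz => ?_
      have h6 := hL.dist_le_mul y (hb y hy) z (hb z hz)
      simp only [(h3 y (hbF y hy)).fderiv, (h3 z (hbF z hz)).fderiv]
      rw [dist_eq_norm, ← map_sub, innerSL_apply_norm, ← dist_eq_norm]
      exact h6
    · intro c R h
      have := (lap_integrable F hFc hFconv hne c R 0 le_rfl (hRp c R h)).1
      have hF0 : {y : E2 | Metric.infDist y F ≤ 0} = F := by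
        ext y
        have := hFc.notMem_iff_infDist_pos hne (x := y)
        constructor
        · intro h
          by_contra hy
          exact absurd (this.1 hy) (not_lt.2 h)
        · intro hy
          by_contra h
          exact this.2 (not_le.1 h) hy
      rwa [hF0] at this
    · intro c R h η hη
      have h1 := (lap_integrable F hFc hFconv hne c R η hη.le (hRp c R h)).2
      have h2 := sphere_toReal c R (hRp c R h)
      have h3 : 0 ≤ (μH[1] (frontier {y : E2 | Metric.infDist y F ≤ η})).toReal :=
        ENNReal.toReal_nonneg
      linarith
end
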